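/- Let G be a simple graph on Fin N and θ : Fin N → ℝ. Then θ is a completely degenerate equilibrium of the identical Kuramoto system on G (i.e., for every vertex k, ∑_j a(j,k)·sin(θ j − θ k) = 0, and for every edge {j,k}, cos(θ j − θ k) = 0) if and only if for every vertex k, the set of neighbors j of k with θ j ≡ θ k + π/2 (mod 2π) and the set of neighbors j of k with θ j ≡ θ k − π/2 (mod 2π) have equal cardinality and together comprise all neighbors of k. -/

import Mathlib

open Real

open Classical in
/-- Adjacency indicator: `1` if `j` and `k` are adjacent in `G`, `0` otherwise. -/
noncomputable def adjInd {V : Type*} (G : SimpleGraph V) (j k : V) : ℝ :=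
  if G.Adj j k then 1 else 0

/-- A completely degenerate equilibrium of the identical Kuramoto system on `G`. -/
def IsCDE {V : Type*} [Fintype V] (G : SimpleGraph V) (θ : V → ℝ) : Prop :=
  (∀ k, ∑ j, adjInd G j k * Real.sin (θ j - θ k) = 0) ∧
  (∀ j k, G.Adj j k → Real.cos (θ j - θ k) = 0)

theorem aux_plus (a b : ℝ) : (∃ m : ℤ, a = b + π / 2 + 2 * π * m) ↔ Real.sin (a - b) = 1 := by
  rw [Real.sin_eq_one_iff]
  exact exists_congr fun m => ⟨fun h => by linarith, fun h => by linarith⟩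

theorem aux_minus (a b : ℝ) : (∃ m : ℤ, a = b - π / 2 + 2 * π * m) ↔ Real.sin (a - b) = -1 := by
  rw [Real.sin_eq_neg_one_iff]
  exact exists_congr fun m => ⟨fun h => by linarith, fun h => by linarith⟩

theorem aux_cos (x : ℝ) : Real.cos x = 0 ↔ (Real.sin x = 1 ∨ Real.sin x = -1) := by
  rw [← sq_eq_one_iff, Real.sin_sq]
  constructor
  · intro h; simp [h]
  · intro h; exact pow_eq_zero_iff (two_ne_zero) |>.1 (by linarith)

open Classical in
theorem aux_sum {N : ℕ} (G : SimpleGraph (Fin N)) (θ : Fin N → ℝ) (k : Fin N)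
    (h : ∀ j, G.Adj j k → (Real.sin (θ j - θ k) = 1 ∨ Real.sin (θ j - θ k) = -1)) :
    ∑ j, adjInd G j k * Real.sin (θ j - θ k) =
      (({j | G.Adj j k ∧ Real.sin (θ j - θ k) = 1} : Set (Fin N)).ncard : ℝ) -
      (({j | G.Adj j k ∧ Real.sin (θ j - θ k) = -1} : Set (Fin N)).ncard : ℝ) := by
  rw [Set.ncard_eq_toFinset_card', Set.ncard_eq_toFinset_card', Set.toFinset_setOf,
    Set.toFinset_setOf, Finset.natCast_card_filter, Finset.natCast_card_filter,
    ← Finset.sum_sub_distrib]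
  refine Finset.sum_congr rfl fun j _ => ?_
  unfold adjInd
  by_cases ha : G.Adj j k
  · rcases h j ha with h1 | h1 <;> simp [ha, h1] <;> norm_num
  · simp [ha]

/-- `θ` is a completely degenerate equilibrium iff for every vertex `k`, the
neighbors of `k` with phase `θ k + π/2 (mod 2π)` and those with phase `θ k - π/2 (mod 2π)`
have equal cardinality and together comprise all neighbors of `k`. -/
theorem stmt0 {N : ℕ} (G : SimpleGraph (Fin N)) (θ : Fin N → ℝ) :
    IsCDE G θ ↔
      ∀ k : Fin N,
        ({j | G.Adj j k ∧ ∃ m : ℤ, θ j = θ k + π / 2 + 2 * π * m} : Set (Fin N)).ncard =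
            ({j | G.Adj j k ∧ ∃ m : ℤ, θ j = θ k - π / 2 + 2 * π * m} : Set (Fin N)).ncard ∧
          ({j | G.Adj j k ∧ ∃ m : ℤ, θ j = θ k + π / 2 + 2 * π * m} ∪
              {j | G.Adj j k ∧ ∃ m : ℤ, θ j = θ k - π / 2 + 2 * π * m} : Set (Fin N)) =
            {j : Fin N | G.Adj j k} := by
  simp only [aux_plus, aux_minus]
  have key : ∀ k, (({j | G.Adj j k ∧ Real.sin (θ j - θ k) = 1} ∪
      {j | G.Adj j k ∧ Real.sin (θ j - θ k) = -1} : Set (Fin N)) = {j : Fin N | G.Adj j k}) ↔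
      ∀ j, G.Adj j k → (Real.sin (θ j - θ k) = 1 ∨ Real.sin (θ j - θ k) = -1) := by
    intro k
    rw [Set.ext_iff]
    refine forall_congr' fun j => ?_
    simp only [Set.mem_union, Set.mem_setOf_eq]
    tauto
  simp only [key]
  unfold IsCDE
  simp only [aux_cos]
  constructor
  · rintro ⟨h1, h2⟩ k
    have h3 := aux_sum G θ k (fun j => h2 j k)
    rw [h1 k] at h3
    exact ⟨by exact_mod_cast (sub_eq_zero.1 h3.symm), fun j => h2 j k⟩
  · intro h
    refine ⟨fun k => ?_, fun j k => (h k).2 j⟩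
    rw [aux_sum G θ k (h k).2, (h k).1, sub_self]
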